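/- Let n ≥ 2 be a natural number, f > 0 a real number, f₁ ≠ 0 a real number, and (f_{ij}) a symmetric n×n real matrix. In the adapted case v = (f₁, 0, …, 0), with g_{ik}, g^{jl}, II_{ij}, R_{ik} and f̄^i defined by the standard graph formulas, one has the identity ∑_{i,k} R_{ik} f̄^i f̄^k = (f²/(1+f₁²)²)·((1+f₁²)/f + f_{11})·∑_{i=2}^n (f_{ii} + 1/f) − (n−1) − (f²/(1+f₁²)²)·∑_{i=2}^n f_{1i}². -/

import Mathlib

/-! On the graph of `f` in the upper half-space the second fundamental form is a rescaling of the
metric perturbed by the Euclidean Hessian, `II = (1 + |Df|²)^(-1/2) • (g + f⁻¹ • D²f)`. Contracting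
the Gauss equation twice with a `g`-unit vector `u` therefore leaves only `D²f(u, u)`, the `g`-trace
of `D²f` and the `g`-norm of `D²f(u, ·)`. For `u` the normalized gradient these are expressed
through `Δf`, `H₁(f) = D²f(Df, Df)` and `H₂(f) = |D²f(Df, ·)|²`, without any choice of coordinates;
the adapted formula is the case in which `Df` is a multiple of a basis vector.
-/

open Matrix

lemma dotProduct_mulVec_eq_sum_sum {m n R : Type*} [Fintype m] [Fintype n] [CommSemiring R]
    (A : Matrix m n R) (u : m → R) (w : n → R) :
    u ⬝ᵥ A *ᵥ w = ∑ i, ∑ k, A i k * u i * w k := by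
  simp only [dotProduct, mulVec, Finset.mul_sum]
  exact Finset.sum_congr rfl fun i _ => Finset.sum_congr rfl fun k _ => by ring

section GaussEquation

variable {ι : Type*} [Fintype ι] {κ : ℝ} {g gInv II : Matrix ι ι ℝ}

/-- The Ricci tensor which the Gauss equation assigns to a hypersurface of a space of constant
sectional curvature `κ`, in terms of its metric `g`, the inverse metric `gInv` and the second
fundamental form `II`. The inverse metric is an independent argument, as it is given in closed
form for graphs. -/
noncomputable def gaussRicci (κ : ℝ) (g gInv II : Matrix ι ι ℝ) : Matrix ι ι ℝ := of fun i k =>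
  κ * (Fintype.card ι - 1) * g i k +
    ∑ j, ∑ l, gInv j l * (II i k * II j l - II i l * II j k)

lemma gaussRicci_eq (κ : ℝ) (g gInv II : Matrix ι ι ℝ) :
    gaussRicci κ g gInv II =
      (κ * (Fintype.card ι - 1)) • g + (gInvᵀ * II).trace • II - II * gInvᵀ * II := by
  ext i k
  have htrace : (gInvᵀ * II).trace = ∑ j, ∑ l, gInv j l * II j l := by
    simp only [trace, diag, mul_apply, transpose_apply]
    exact Finset.sum_comm
  have hsquare : (II * gInvᵀ * II) i k = ∑ j, ∑ l, gInv j l * (II i l * II j k) := by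
    simp only [mul_apply, transpose_apply, Finset.sum_mul]
    exact Finset.sum_congr rfl fun j _ => Finset.sum_congr rfl fun l _ => by ring
  rw [Matrix.sub_apply, hsquare]
  simp only [gaussRicci, of_apply, Matrix.add_apply, Matrix.smul_apply, smul_eq_mul, htrace,
    mul_sub, Finset.sum_sub_distrib, Finset.sum_mul, add_sub_assoc, mul_assoc, mul_comm (II i k)]

lemma dotProduct_gaussRicci_mulVec (hgInv : gInv.IsSymm) (hII : II.IsSymm) (u : ι → ℝ) :
    u ⬝ᵥ gaussRicci κ g gInv II *ᵥ u =
      κ * (Fintype.card ι - 1) * (u ⬝ᵥ g *ᵥ u) + (gInv * II).trace * (u ⬝ᵥ II *ᵥ u) -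
        (II *ᵥ u) ⬝ᵥ gInv *ᵥ II *ᵥ u := by
  have hsquare : u ⬝ᵥ (II * gInv * II) *ᵥ u = (II *ᵥ u) ⬝ᵥ gInv *ᵥ II *ᵥ u := by
    rw [← mulVec_mulVec, ← mulVec_mulVec, dotProduct_mulVec, ← mulVec_transpose, hII.eq]
  rw [gaussRicci_eq, hgInv.eq, sub_mulVec, add_mulVec, smul_mulVec, smul_mulVec,
    dotProduct_sub, dotProduct_add, dotProduct_smul, dotProduct_smul, hsquare,
    smul_eq_mul, smul_eq_mul]

variable [DecidableEq ι]

lemma dotProduct_gaussRicci_mulVec_of_unit (hg : g.IsSymm) (hmul : gInv * g = 1)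
    {F : Matrix ι ι ℝ} (hF : F.IsSymm) (s t : ℝ) {u : ι → ℝ} (hu : u ⬝ᵥ g *ᵥ u = 1) :
    u ⬝ᵥ gaussRicci κ g gInv (s • (g + t • F)) *ᵥ u =
      κ * (Fintype.card ι - 1) +
        s ^ 2 * ((1 + t * (u ⬝ᵥ F *ᵥ u)) * (Fintype.card ι - 1 + t * (gInv * F).trace) -
          t * (u ⬝ᵥ F *ᵥ u) - t ^ 2 * ((F *ᵥ u) ⬝ᵥ gInv *ᵥ F *ᵥ u)) := by
  have hgInv : gInv.IsSymm := inv_eq_left_inv hmul ▸ hg.inv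
  have hII : (s • (g + t • F)).IsSymm := (hg.add (hF.smul t)).smul s
  have htrace : (gInv * (s • (g + t • F))).trace = s * (Fintype.card ι + t * (gInv * F).trace) := by
    simp only [Matrix.mul_smul, Matrix.mul_add, hmul, trace_smul, trace_add, trace_one, smul_eq_mul]
  have hmulVec : (s • (g + t • F)) *ᵥ u = s • (g *ᵥ u + t • F *ᵥ u) := by
    simp only [smul_mulVec, add_mulVec]
  have hraise : gInv *ᵥ g *ᵥ u = u := by rw [mulVec_mulVec, hmul, one_mulVec]
  have hcross : (g *ᵥ u) ⬝ᵥ gInv *ᵥ F *ᵥ u = u ⬝ᵥ F *ᵥ u := by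
    rw [dotProduct_mulVec, ← mulVec_transpose, hgInv.eq, hraise]
  rw [dotProduct_gaussRicci_mulVec hgInv hII, htrace, hmulVec]
  simp only [mulVec_smul, mulVec_add, dotProduct_smul, smul_dotProduct, dotProduct_add,
    add_dotProduct, smul_eq_mul, hraise, hcross, hu, dotProduct_comm (g *ᵥ u) u,
    dotProduct_comm (F *ᵥ u) u]
  ring

end GaussEquation

section Graph

variable {ι : Type*} {f : ℝ} {v : ι → ℝ} {F : Matrix ι ι ℝ}

/-- The metric induced from hyperbolic space on a vertical graph, at a point where the height is
`f` and the Euclidean gradient of the height is `v`. -/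
noncomputable def graphMetric [DecidableEq ι] (f : ℝ) (v : ι → ℝ) : Matrix ι ι ℝ :=
  (1 / f ^ 2) • (1 + vecMulVec v v)

lemma isSymm_graphMetric [DecidableEq ι] (f : ℝ) (v : ι → ℝ) : (graphMetric f v).IsSymm :=
  (isSymm_one.add (transpose_vecMulVec v v)).smul _

lemma graphMetric_apply [DecidableEq ι] (f : ℝ) (v : ι → ℝ) (i j : ι) :
    graphMetric f v i j = (1 / f ^ 2) * ((if i = j then 1 else 0) + v i * v j) :=
  rfl

variable [Fintype ι]

/-- The gradient with respect to `graphMetric f v` of the height of a vertical graph, scaled to unit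
length; it is `0` where `v = 0`. -/
noncomputable def graphUnitGradient (f : ℝ) (v : ι → ℝ) : ι → ℝ :=
  (f / (√(v ⬝ᵥ v) * √(1 + v ⬝ᵥ v))) • v

lemma graphUnitGradient_apply (f : ℝ) (v : ι → ℝ) (i : ι) :
    graphUnitGradient f v i = f * v i / (√(v ⬝ᵥ v) * √(1 + v ⬝ᵥ v)) :=
  div_mul_eq_mul_div _ _ _

lemma one_add_dotProduct_self_pos (v : ι → ℝ) : 0 < 1 + v ⬝ᵥ v := by
  have hD : 0 ≤ v ⬝ᵥ v := dotProduct_star_self_nonneg v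
  positivity

lemma graphUnitGradient_coeff_sq (f : ℝ) (v : ι → ℝ) :
    (f / (√(v ⬝ᵥ v) * √(1 + v ⬝ᵥ v))) ^ 2 = f ^ 2 / ((v ⬝ᵥ v) * (1 + v ⬝ᵥ v)) := by
  have hD : 0 ≤ v ⬝ᵥ v := dotProduct_star_self_nonneg v
  rw [div_pow, mul_pow, Real.sq_sqrt hD, Real.sq_sqrt (one_add_dotProduct_self_pos v).le]

lemma graphUnitGradient_dotProduct_mulVec (f : ℝ) (v : ι → ℝ) (A : Matrix ι ι ℝ) :
    graphUnitGradient f v ⬝ᵥ A *ᵥ graphUnitGradient f v =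
      f ^ 2 / ((v ⬝ᵥ v) * (1 + v ⬝ᵥ v)) * (v ⬝ᵥ A *ᵥ v) := by
  rw [← graphUnitGradient_coeff_sq, graphUnitGradient, mulVec_smul, smul_dotProduct,
    dotProduct_smul, smul_eq_mul, smul_eq_mul]
  ring

variable [DecidableEq ι]

/-- The closed form of the inverse of `graphMetric f v`. -/
noncomputable def graphMetricInv (f : ℝ) (v : ι → ℝ) : Matrix ι ι ℝ :=
  f ^ 2 • (1 - (1 / (1 + v ⬝ᵥ v)) • vecMulVec v v)

lemma graphMetricInv_apply (f : ℝ) (v : ι → ℝ) (i j : ι) :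
    graphMetricInv f v i j =
      f ^ 2 * ((if i = j then 1 else 0) - v i * v j / (1 + v ⬝ᵥ v)) := by
  simp [graphMetricInv, one_apply, vecMulVec_apply, div_eq_inv_mul]

lemma graphMetricInv_mul_graphMetric (hf : f ≠ 0) (v : ι → ℝ) :
    graphMetricInv f v * graphMetric f v = 1 := by
  have hW := (one_add_dotProduct_self_pos v).ne'
  have hsq : vecMulVec v v * vecMulVec v v = (v ⬝ᵥ v) • vecMulVec v v := by
    rw [vecMulVec_mul_vecMulVec, vecMulVec_smul]
  rw [graphMetricInv, graphMetric, smul_mul_smul_comm, mul_one_div_cancel (pow_ne_zero 2 hf),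
    one_smul, Matrix.sub_mul, Matrix.one_mul, Matrix.smul_mul, Matrix.mul_add, Matrix.mul_one, hsq]
  match_scalars
  · field_simp
  · field_simp
    ring

/-- The second fundamental form in hyperbolic space of a vertical graph, at a point where the height
is `f` and has Euclidean gradient `v` and Hessian `F`. -/
noncomputable def graphSecondForm (f : ℝ) (v : ι → ℝ) (F : Matrix ι ι ℝ) : Matrix ι ι ℝ :=
  (1 / (f ^ 2 * √(1 + v ⬝ᵥ v))) • (1 + vecMulVec v v + f • F)

lemma graphSecondForm_apply (f : ℝ) (v : ι → ℝ) (F : Matrix ι ι ℝ) (i j : ι) :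
    graphSecondForm f v F i j =
      ((if i = j then 1 else 0) + v i * v j + f * F i j) / (f ^ 2 * √(1 + v ⬝ᵥ v)) := by
  rw [graphSecondForm, Matrix.smul_apply, smul_eq_mul, one_div_mul_eq_div]
  simp only [Matrix.add_apply, Matrix.smul_apply, one_apply, vecMulVec_apply, smul_eq_mul]

lemma graphSecondForm_eq (hf : f ≠ 0) (v : ι → ℝ) (F : Matrix ι ι ℝ) :
    graphSecondForm f v F = (√(1 + v ⬝ᵥ v))⁻¹ • (graphMetric f v + f⁻¹ • F) := by
  rw [graphSecondForm, graphMetric]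
  match_scalars <;> field_simp

lemma graphUnitGradient_dotProduct_graphMetric_mulVec (hf : f ≠ 0) (hv : v ≠ 0) :
    graphUnitGradient f v ⬝ᵥ graphMetric f v *ᵥ graphUnitGradient f v = 1 := by
  have hD : v ⬝ᵥ v ≠ 0 := dotProduct_self_eq_zero.not.mpr hv
  have hW := (one_add_dotProduct_self_pos v).ne'
  have hmetric : v ⬝ᵥ graphMetric f v *ᵥ v = 1 / f ^ 2 * ((v ⬝ᵥ v) * (1 + v ⬝ᵥ v)) := by
    simp only [graphMetric, smul_mulVec, add_mulVec, one_mulVec, vecMulVec_mulVec, op_smul_eq_smul,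
      dotProduct_smul, dotProduct_add, smul_eq_mul]
    ring
  rw [graphUnitGradient_dotProduct_mulVec, hmetric]
  field_simp

lemma trace_graphMetricInv_mul (f : ℝ) (v : ι → ℝ) (A : Matrix ι ι ℝ) :
    (graphMetricInv f v * A).trace = f ^ 2 * (A.trace - (v ⬝ᵥ A *ᵥ v) / (1 + v ⬝ᵥ v)) := by
  simp only [graphMetricInv, Matrix.smul_mul, Matrix.sub_mul, Matrix.one_mul,
    vecMulVec_mul, trace_smul, trace_sub, trace_vecMulVec, dotProduct_mulVec, smul_eq_mul,
    dotProduct_comm v (v ᵥ* A)]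
  ring

lemma dotProduct_graphMetricInv_mulVec (f : ℝ) (v w : ι → ℝ) :
    w ⬝ᵥ graphMetricInv f v *ᵥ w = f ^ 2 * (w ⬝ᵥ w - (v ⬝ᵥ w) ^ 2 / (1 + v ⬝ᵥ v)) := by
  simp only [graphMetricInv, smul_mulVec, sub_mulVec, one_mulVec, vecMulVec_mulVec,
    op_smul_eq_smul, dotProduct_smul, dotProduct_sub, smul_eq_mul, dotProduct_comm w v]
  ring

lemma mulVec_graphUnitGradient_dotProduct_graphMetricInv_mulVec (f : ℝ) (v : ι → ℝ)
    (A : Matrix ι ι ℝ) :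
    (A *ᵥ graphUnitGradient f v) ⬝ᵥ graphMetricInv f v *ᵥ A *ᵥ graphUnitGradient f v =
      f ^ 4 / ((v ⬝ᵥ v) * (1 + v ⬝ᵥ v)) *
        ((A *ᵥ v) ⬝ᵥ (A *ᵥ v) - (v ⬝ᵥ A *ᵥ v) ^ 2 / (1 + v ⬝ᵥ v)) := by
  have hcoeff := graphUnitGradient_coeff_sq f v
  rw [dotProduct_graphMetricInv_mulVec, graphUnitGradient, mulVec_smul]
  simp only [smul_dotProduct, dotProduct_smul, smul_eq_mul]
  linear_combination f ^ 2 * ((A *ᵥ v) ⬝ᵥ (A *ᵥ v) - (v ⬝ᵥ A *ᵥ v) ^ 2 / (1 + v ⬝ᵥ v)) * hcoeff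

/-- The Ricci tensor of a vertical graph in hyperbolic space, given by the Gauss equation with
ambient curvature `-1`. -/
noncomputable def graphRicci (f : ℝ) (v : ι → ℝ) (F : Matrix ι ι ℝ) : Matrix ι ι ℝ :=
  gaussRicci (-1) (graphMetric f v) (graphMetricInv f v) (graphSecondForm f v F)

theorem graphRicci_graphUnitGradient (hf : f ≠ 0) (hv : v ≠ 0) (hF : F.IsSymm) :
    graphUnitGradient f v ⬝ᵥ graphRicci f v F *ᵥ graphUnitGradient f v =
      1 / (1 + v ⬝ᵥ v) *
          ((1 + f * (v ⬝ᵥ F *ᵥ v) / ((v ⬝ᵥ v) * (1 + v ⬝ᵥ v))) *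
              (Fintype.card ι - 1 + f * F.trace) -
            f * (v ⬝ᵥ F *ᵥ v) / (v ⬝ᵥ v) -
            f ^ 2 * ((F *ᵥ v) ⬝ᵥ (F *ᵥ v)) / ((v ⬝ᵥ v) * (1 + v ⬝ᵥ v))) -
        (Fintype.card ι - 1) := by
  have hD : v ⬝ᵥ v ≠ 0 := dotProduct_self_eq_zero.not.mpr hv
  have hW := one_add_dotProduct_self_pos v
  rw [graphRicci, graphSecondForm_eq hf,
    dotProduct_gaussRicci_mulVec_of_unit (isSymm_graphMetric f v)
      (graphMetricInv_mul_graphMetric hf v) hF _ _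
      (graphUnitGradient_dotProduct_graphMetric_mulVec hf hv),
    graphUnitGradient_dotProduct_mulVec, trace_graphMetricInv_mul,
    mulVec_graphUnitGradient_dotProduct_graphMetricInv_mulVec, inv_pow, Real.sq_sqrt hW.le]
  field_simp
  ring

theorem ricci_normalized_gradient_adapted_general (hf : f ≠ 0) {a : ℝ} (ha : a ≠ 0) (i₀ : ι)
    (hF : F.IsSymm) :
    ∑ i, ∑ k, graphRicci f (Pi.single i₀ a) F i k * graphUnitGradient f (Pi.single i₀ a) i *
        graphUnitGradient f (Pi.single i₀ a) k =
      (f ^ 2 / (1 + a ^ 2) ^ 2) * ((1 + a ^ 2) / f + F i₀ i₀) *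
          (∑ i ∈ Finset.univ.erase i₀, (F i i + 1 / f))
        - (Fintype.card ι - 1 : ℝ)
        - (f ^ 2 / (1 + a ^ 2) ^ 2) * ∑ i ∈ Finset.univ.erase i₀, (F i₀ i) ^ 2 := by
  have hnorm : (Pi.single i₀ a : ι → ℝ) ⬝ᵥ Pi.single i₀ a = a ^ 2 := by
    rw [single_dotProduct, Pi.single_eq_same, sq]
  have hH₁ : (Pi.single i₀ a : ι → ℝ) ⬝ᵥ F *ᵥ Pi.single i₀ a = a ^ 2 * F i₀ i₀ := by
    rw [single_dotProduct, mulVec_single]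
    simp only [Pi.smul_apply, col_apply, MulOpposite.smul_eq_mul_unop, MulOpposite.unop_op]
    ring
  have hH₂ : (F *ᵥ Pi.single i₀ a) ⬝ᵥ (F *ᵥ Pi.single i₀ a) =
      a ^ 2 * (F i₀ i₀ ^ 2 + ∑ i ∈ Finset.univ.erase i₀, F i₀ i ^ 2) := by
    rw [Finset.add_sum_erase _ (fun i => F i₀ i ^ 2) (Finset.mem_univ i₀), Finset.mul_sum]
    refine Finset.sum_congr rfl fun i _ => ?_
    simp only [mulVec_single, Pi.smul_apply, col_apply, hF.apply i₀ i,
      MulOpposite.smul_eq_mul_unop, MulOpposite.unop_op]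
    ring
  have htrace : F.trace = F i₀ i₀ + ∑ i ∈ Finset.univ.erase i₀, F i i :=
    (Finset.add_sum_erase _ (fun i => F i i) (Finset.mem_univ i₀)).symm
  have hshift : ∑ i ∈ Finset.univ.erase i₀, (F i i + 1 / f) =
      ∑ i ∈ Finset.univ.erase i₀, F i i + (Fintype.card ι - 1) / f := by
    rw [Finset.sum_add_distrib, Finset.sum_const, nsmul_eq_mul,
      Finset.cast_card_erase_of_mem (Finset.mem_univ i₀), Finset.card_univ, mul_one_div]
  rw [← dotProduct_mulVec_eq_sum_sum,
    graphRicci_graphUnitGradient hf (Pi.single_ne_zero_iff.mpr ha) hF, hnorm, hH₁, hH₂, htrace,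
    hshift]
  field_simp
  ring

end Graph

/-- Identity (3.7): the Ricci curvature of a vertical graph in the direction of the
normalized gradient of `f`, in adapted coordinates where the gradient is `(f₁,0,…,0)`. -/
theorem ricci_normalized_gradient_adapted (n : ℕ) (hn : 2 ≤ n)
    (f : ℝ) (hf : 0 < f) (f₁ : ℝ) (hf₁ : f₁ ≠ 0)
    (i₀ : Fin n) (hi₀ : (i₀ : ℕ) = 0)
    (v : Fin n → ℝ) (hv : v = fun i => if i = i₀ then f₁ else 0)
    (fd : Fin n → Fin n → ℝ) (hfd : ∀ i j, fd i j = fd j i)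
    (Df2 : ℝ) (hDf2 : Df2 = ∑ i, (v i) ^ 2)
    (g gInv II R : Fin n → Fin n → ℝ) (fbar : Fin n → ℝ)
    (hg : ∀ i k, g i k = (1 / f ^ 2) * ((if i = k then (1:ℝ) else 0) + v i * v k))
    (hgInv : ∀ j l, gInv j l =
      f ^ 2 * ((if j = l then (1:ℝ) else 0) - v j * v l / (1 + Df2)))
    (hII : ∀ i j, II i j =
      ((if i = j then (1:ℝ) else 0) + v i * v j + f * fd i j) / (f ^ 2 * Real.sqrt (1 + Df2)))
    (hR : ∀ i k, R i k = -(n - 1 : ℝ) * g i k +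
      ∑ j, ∑ l, gInv j l * (II i k * II j l - II i l * II j k))
    (hfbar : ∀ i, fbar i = f * v i / (Real.sqrt Df2 * Real.sqrt (1 + Df2))) :
    ∑ i, ∑ k, R i k * fbar i * fbar k =
      (f ^ 2 / (1 + f₁ ^ 2) ^ 2) * ((1 + f₁ ^ 2) / f + fd i₀ i₀) *
          (∑ i ∈ Finset.univ.erase i₀, (fd i i + 1 / f))
        - (n - 1 : ℝ)
        - (f ^ 2 / (1 + f₁ ^ 2) ^ 2) * ∑ i ∈ Finset.univ.erase i₀, (fd i₀ i) ^ 2 := by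
  obtain rfl : Df2 = v ⬝ᵥ v := by simp only [hDf2, dotProduct, sq]
  obtain rfl : v = Pi.single i₀ f₁ := hv.trans (funext fun i => (Pi.single_apply i₀ f₁ i).symm)
  obtain rfl : g = graphMetric f (Pi.single i₀ f₁) :=
    funext₂ fun i k => (hg i k).trans (graphMetric_apply ..).symm
  obtain rfl : gInv = graphMetricInv f (Pi.single i₀ f₁) :=
    funext₂ fun j l => (hgInv j l).trans (graphMetricInv_apply ..).symm
  obtain rfl : II = graphSecondForm f (Pi.single i₀ f₁) fd :=
    funext₂ fun i j => (hII i j).trans (graphSecondForm_apply f _ (.of fd) i j).symm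
  obtain rfl : fbar = graphUnitGradient f (Pi.single i₀ f₁) :=
    funext fun i => (hfbar i).trans (graphUnitGradient_apply ..).symm
  obtain rfl : R = graphRicci f (Pi.single i₀ f₁) fd :=
    funext₂ fun i k => by simp [hR, graphRicci, gaussRicci]
  simpa only [Fintype.card_fin] using
    ricci_normalized_gradient_adapted_general hf.ne' hf₁ i₀ (.ext fun i j => hfd j i)
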